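/- For every relational vocabulary ρ and all k, ℓ, q ∈ ℕ there exist q*, r* ∈ ℕ such that the following holds. Let B be a ρ-structure, φ(x̄; ȳ) a first-order formula over ρ of quantifier rank at most q with |x̄| = k and |ȳ| = ℓ, and v̄ = (v₁,…,v_ℓ) ∈ U(B)^ℓ. Let 0 ≤ m ≤ ℓ, v̄° = (v₁,…,v_m), v̄• = (v_{m+1},…,v_ℓ). Let ū, ū' ∈ U(B)^k satisfy N_{r*}(ū v̄°) ∩ N_{r*}(v̄•) = ∅, N_{r*}(ū' v̄°) ∩ N_{r*}(v̄•) = ∅, and ltp_{q*,r*}(B, ū v̄°) = ltp_{q*,r*}(B, ū' v̄°). Then B ⊨ φ(ū; v̄) if and only if B ⊨ φ(ū'; v̄). -/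

import Mathlib

open FirstOrder FirstOrder.Language

universe w

/-- The quantifier rank of a first-order (bounded) formula: the nesting depth of quantifiers. -/
def qRank {L : FirstOrder.Language} : ∀ {α : Type*} {n : ℕ}, L.BoundedFormula α n → ℕ
  | _, _, .falsum => 0
  | _, _, .equal _ _ => 0
  | _, _, .rel _ _ => 0
  | _, _, .imp f g => max (qRank f) (qRank g)
  | _, _, .all f => qRank f + 1

/-- Adjacency in the Gaifman graph of a structure: two distinct elements are adjacent iff
they occur together in some tuple of some relation. -/
def gaifmanAdj (L : FirstOrder.Language) (M : Type w) [L.Structure M] (a b : M) : Prop :=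
  a ≠ b ∧ ∃ (n : ℕ) (R : L.Relations n) (t : Fin n → M),
    Structure.RelMap R t ∧ (∃ i, t i = a) ∧ (∃ j, t j = b)

/-- `distLE L M r a b` means the distance between `a` and `b` in the Gaifman graph of `M`
is at most `r`. -/
def distLE (L : FirstOrder.Language) (M : Type w) [L.Structure M] : ℕ → M → M → Prop
  | 0, a, b => a = b
  | r + 1, a, b => a = b ∨ ∃ c, gaifmanAdj L M a c ∧ distLE L M r c b

theorem distLE_self (L : FirstOrder.Language) (M : Type w) [L.Structure M] (r : ℕ) (a : M) :
    distLE L M r a a := by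
  cases r with
  | zero => rfl
  | succ r => exact Or.inl rfl

/-- The `r`-neighbourhood of a tuple: all elements at Gaifman distance at most `r`
from some component of the tuple. -/
def nbhd (L : FirstOrder.Language) (M : Type w) [L.Structure M] (r : ℕ) {k : ℕ}
    (u : Fin k → M) : Set M :=
  {b | ∃ i, distLE L M r (u i) b}

/-- `IsDistFormula L r d` says that the formula `d`, with two free variables, expresses
that the Gaifman distance between its two arguments is at most `r` (this is the property
of the formula `δ_{≤r}`). -/
def IsDistFormula.{v} (L : FirstOrder.Language) (r : ℕ) (d : L.Formula (Fin 2)) : Prop :=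
  ∀ (M : Type v) [L.Structure M], ∀ a b : M, d.Realize ![a, b] ↔ distLE L M r a b

/-- The radius-`r` relativisation of a formula with free variables `x_0, …, x_{k-1}`,
relative to a formula `d = δ_{≤r}` expressing distance at most `r`: every (universal)
quantifier `∀ y ψ` is replaced by `∀ y (⋁_i δ_{≤r}(x_i, y) → ψ)` (and consequently every
existential quantifier `∃ y ψ` by `∃ y (⋁_i δ_{≤r}(x_i, y) ∧ ψ)`). -/
def relativize {L : FirstOrder.Language} (d : L.Formula (Fin 2)) :
    ∀ {k n : ℕ}, L.BoundedFormula (Fin k) n → L.BoundedFormula (Fin k) n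
  | _, _, .falsum => .falsum
  | _, _, .equal t₁ t₂ => .equal t₁ t₂
  | _, _, .rel R ts => .rel R ts
  | _, _, .imp f g => (relativize d f).imp (relativize d g)
  | k, n, .all f =>
      ((((List.finRange k).map fun i =>
          BoundedFormula.relabel (![Sum.inl i, Sum.inr (Fin.last n)] : Fin 2 → (Fin k) ⊕ (Fin (n + 1))) d).foldr
            (· ⊔ ·) ⊥).imp (relativize d f)).all

/-- A formula is syntactically `r`-local (w.r.t. the distance formula `d = δ_{≤r}`) if it is
the radius-`r` relativisation of some formula. -/
def SynLocal {L : FirstOrder.Language} (d : L.Formula (Fin 2)) {k : ℕ}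
    (φ : L.Formula (Fin k)) : Prop :=
  ∃ ψ : L.Formula (Fin k), φ = relativize d ψ

/-- The local `(q, r)`-type of a tuple `u` in `M`: the set of syntactically `r`-local formulas
(w.r.t. the distance formula `d = δ_{≤r}`) of quantifier rank at most `q` satisfied by `u`. -/
def ltp {L : FirstOrder.Language} (d : L.Formula (Fin 2)) (q : ℕ) (M : Type w) [L.Structure M]
    {k : ℕ} (u : Fin k → M) : Set (L.Formula (Fin k)) :=
  {φ | SynLocal d φ ∧ qRank φ ≤ q ∧ φ.Realize u}

/-- The first-order `q`-type of a tuple `u` in `M`: the set of formulas of quantifier rank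
at most `q` (with free variables among `x_0, …, x_{k-1}`) satisfied by `u`. -/
def ftp {L : FirstOrder.Language} (q : ℕ) (M : Type w) [L.Structure M]
    {k : ℕ} (u : Fin k → M) : Set (L.Formula (Fin k)) :=
  {φ | qRank φ ≤ q ∧ φ.Realize u}

/-- The union of two disjoint structures (realized as a structure on the sum type):
a relation holds of a tuple iff the tuple lies entirely in one part and the relation
holds there. -/
def sumStructure (L : FirstOrder.Language) [L.IsRelational] (M N : Type w)
    [L.Structure M] [L.Structure N] : L.Structure (M ⊕ N) where
  funMap f _ := isEmptyElim f
  RelMap R t :=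
    (∃ s, t = Sum.inl ∘ s ∧ Structure.RelMap R s) ∨
    (∃ s, t = Sum.inr ∘ s ∧ Structure.RelMap R s)

/-- The substructure of `M` induced on a subset `S`. -/
def inducedStructure (L : FirstOrder.Language) [L.IsRelational] {M : Type w} [L.Structure M]
    (S : Set M) : L.Structure S where
  funMap f _ := isEmptyElim f
  RelMap R t := Structure.RelMap R fun i => (t i : M)

/-- A formula `φ(x_1, …, x_k)` is `r`-local if for every structure `M` and every tuple `u`,
`M ⊨ φ(u)` iff the substructure induced on the `r`-neighbourhood of `u` satisfies `φ(u)`. -/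
def RLocal.{v} (L : FirstOrder.Language) [L.IsRelational] (r : ℕ) {k : ℕ}
    (φ : L.Formula (Fin k)) : Prop :=
  ∀ (M : Type v) [L.Structure M] (u : Fin k → M),
    φ.Realize u ↔
      (letI := inducedStructure L (nbhd L M r u)
       Formula.Realize (M := nbhd L M r u) φ
         (fun i => ⟨u i, i, distLE_self L M r (u i)⟩))

/-!
Duplicator wins the Ehrenfeucht–Fraïssé game on `B` from the position matching `ū v̄` with `ū' v̄`
by maintaining a local invariant: the neighbourhoods of the two sides are equivalent for a game in
which positions preserve Gaifman distances up to the radius `r`, and `r` shrinks tenfold per round.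

A move `c` near the position is answered inside that local game. A move `c` far from the position
needs an answer `c'` of the same local type far from the other side, and it exists by counting.
Otherwise all elements locally equivalent to `c` lie within `3r` of the other side. Pull a scattered
tuple of such elements back through the local game: the result is scattered and near the first side,
so adding `c` gives a larger scattered tuple of elements equivalent to `c`. Iterating yields more
scattered elements than the at most `n` balls around the other side can hold.

Local equivalences on far apart neighbourhoods combine, so the invariant holds initially: on
`ū v̄°` and `ū' v̄°` because the vocabulary is finite and the finitely many Hintikka types of the
local game are expressed by local formulas, and on `v̄•` by the identity.
-/

section GaifmanGraph

variable {L : FirstOrder.Language} {M : Type*} [L.Structure M]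

/-- The Gaifman graph of a structure as a `SimpleGraph`, so that the metric `SimpleGraph.edist`
applies to it. -/
def gaifmanGraph (L : FirstOrder.Language) (M : Type*) [L.Structure M] : SimpleGraph M where
  Adj := gaifmanAdj L M
  symm := ⟨fun _ _ ⟨hab, n, R, t, hR, ha, hb⟩ => ⟨hab.symm, n, R, t, hR, hb, ha⟩⟩
  loopless := ⟨fun _ h => h.1 rfl⟩

theorem distLE_iff_edist_le {r : ℕ} {a b : M} :
    distLE L M r a b ↔ (gaifmanGraph L M).edist a b ≤ r := by
  induction r generalizing a with
  | zero => simp [distLE]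
  | succ r ih =>
    constructor
    · rintro (rfl | ⟨c, hac, hcb⟩)
      · simp
      · have hac : (gaifmanGraph L M).edist a c = 1 := SimpleGraph.edist_eq_one_iff_adj.2 hac
        calc (gaifmanGraph L M).edist a b
            ≤ (gaifmanGraph L M).edist a c + (gaifmanGraph L M).edist c b :=
              SimpleGraph.edist_triangle
          _ ≤ 1 + r := add_le_add hac.le (ih.1 hcb)
          _ = (r + 1 : ℕ) := by rw [add_comm, Nat.cast_succ]
    · intro h
      obtain ⟨p, hp⟩ := SimpleGraph.exists_walk_of_edist_ne_top
        (ne_top_of_le_ne_top (ENat.natCast_ne_top _) h)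
      rw [← hp, Nat.cast_le] at h
      cases p with
      | nil => exact Or.inl rfl
      | cons hac p =>
        refine Or.inr ⟨_, hac, ih.2 (p.edist_le.trans ?_)⟩
        exact_mod_cast Nat.le_of_succ_le_succ h

theorem distLE_mono {r s : ℕ} (hrs : r ≤ s) {a b : M} (h : distLE L M r a b) :
    distLE L M s a b :=
  distLE_iff_edist_le.2 ((distLE_iff_edist_le.1 h).trans (by exact_mod_cast hrs))

theorem distLE_comm {r : ℕ} {a b : M} : distLE L M r a b ↔ distLE L M r b a := by
  rw [distLE_iff_edist_le, distLE_iff_edist_le, SimpleGraph.edist_comm]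

theorem distLE_trans {r s : ℕ} {a b c : M} (hab : distLE L M r a b) (hbc : distLE L M s b c) :
    distLE L M (r + s) a c := by
  rw [distLE_iff_edist_le] at *
  exact SimpleGraph.edist_triangle.trans (by exact_mod_cast add_le_add hab hbc)

theorem distLE_one_of_relMap {n : ℕ} {R : L.Relations n} {t : Fin n → M}
    (h : Structure.RelMap R t) (i j : Fin n) : distLE L M 1 (t i) (t j) := by
  by_cases hij : t i = t j
  · exact Or.inl hij
  · exact Or.inr ⟨t j, ⟨hij, n, R, t, h, ⟨i, rfl⟩, ⟨j, rfl⟩⟩, rfl⟩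

/-- The closed `r`-neighbourhood of a set of elements in the Gaifman graph. -/
def gaifmanNbhd (L : FirstOrder.Language) {M : Type*} [L.Structure M] (r : ℕ) (X : Set M) :
    Set M :=
  {b | ∃ x ∈ X, distLE L M r x b}

theorem nbhd_eq_gaifmanNbhd_range (r : ℕ) {k : ℕ} (u : Fin k → M) :
    nbhd L M r u = gaifmanNbhd L r (Set.range u) := by
  ext b
  simp [nbhd, gaifmanNbhd]

theorem subset_gaifmanNbhd (r : ℕ) (X : Set M) : X ⊆ gaifmanNbhd L r X :=
  fun x hx => ⟨x, hx, distLE_self L M r x⟩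

theorem gaifmanNbhd_subset_gaifmanNbhd {r s t : ℕ} {X Y : Set M} (hX : X ⊆ gaifmanNbhd L s Y)
    (hst : s + r ≤ t) : gaifmanNbhd L r X ⊆ gaifmanNbhd L t Y := by
  rintro b ⟨x, hx, hxb⟩
  obtain ⟨y, hy, hyx⟩ := hX hx
  exact ⟨y, hy, distLE_mono hst (distLE_trans hyx hxb)⟩

theorem gaifmanNbhd_mono {r s : ℕ} {X Y : Set M} (hrs : r ≤ s) (hXY : X ⊆ Y) :
    gaifmanNbhd L r X ⊆ gaifmanNbhd L s Y :=
  fun _ ⟨x, hx, hxb⟩ => ⟨x, hXY hx, distLE_mono hrs hxb⟩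

theorem gaifmanNbhd_union (r : ℕ) (X Y : Set M) :
    gaifmanNbhd L r (X ∪ Y) = gaifmanNbhd L r X ∪ gaifmanNbhd L r Y := by
  ext b
  simp [gaifmanNbhd, or_and_right, exists_or]

theorem disjoint_gaifmanNbhd_left {r : ℕ} {X Y : Set M} :
    Disjoint (gaifmanNbhd L r X) Y ↔ ∀ x ∈ X, ∀ y ∈ Y, ¬ distLE L M r x y := by
  rw [Set.disjoint_left]
  exact ⟨fun h x hx y hy hxy => h ⟨x, hx, hxy⟩ hy,
    fun h y ⟨x, hx, hxy⟩ hy => h x hx y hy hxy⟩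

theorem disjoint_gaifmanNbhd_gaifmanNbhd {r s t : ℕ} {X Y : Set M} (hrs : r + s ≤ t)
    (h : Disjoint (gaifmanNbhd L t X) Y) :
    Disjoint (gaifmanNbhd L r X) (gaifmanNbhd L s Y) := by
  rw [disjoint_gaifmanNbhd_left] at *
  rintro x hx b ⟨y, hy, hyb⟩ hxb
  exact h x hx y hy (distLE_mono hrs (distLE_trans hxb (distLE_comm.1 hyb)))

/-- An `r`-scattered family of elements: distinct members are at Gaifman distance more than `r`. -/
def IsScattered (L : FirstOrder.Language) {M ι : Type*} [L.Structure M] (r : ℕ) (s : ι → M) :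
    Prop :=
  Pairwise fun i j => ¬ distLE L M r (s i) (s j)

theorem IsScattered.cons {n r : ℕ} {s : Fin n → M} {c : M} (hs : IsScattered L r s)
    (hc : ∀ i, ¬ distLE L M r (s i) c) : IsScattered L r (Fin.cons c s : Fin (n + 1) → M) := by
  intro i j hij
  cases i using Fin.cases with
  | zero => cases j using Fin.cases with
    | zero => exact absurd rfl hij
    | succ j => exact fun h => hc j (distLE_comm.1 h)
  | succ i => cases j using Fin.cases with
    | zero => exact hc i
    | succ j => exact hs fun h => hij (congrArg Fin.succ h)

theorem not_isScattered_of_encard_le {n r : ℕ} {X : Set M} (hX : X.encard ≤ n)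
    {s : Fin (n + 1) → M} (hs : ∀ i, s i ∈ gaifmanNbhd L r X) : ¬ IsScattered L (r + r) s := by
  intro hscattered
  choose x hx hxs using hs
  have hcard : X.encard < (Set.univ : Set (Fin (n + 1))).encard := by
    rw [Set.encard_univ, ENat.card_eq_coe_fintype_card, Fintype.card_fin]
    exact hX.trans_lt (by exact_mod_cast Nat.lt_succ_self n)
  obtain ⟨i, -, j, -, hij, hxij⟩ :=
    Set.exists_ne_map_eq_of_encard_lt_of_maps_to hcard (f := x) fun i _ => hx i
  exact hscattered hij (distLE_trans (distLE_comm.1 (hxs i)) (hxij ▸ hxs j))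

end GaifmanGraph
section Game

variable {L : FirstOrder.Language} {M N P : Type*} [L.Structure M] [L.Structure N] [L.Structure P]

/-- A relation between two structures which preserves and reflects the relation symbols and all
Gaifman distances up to `ρ`. Equality is distance `0`, so for `ρ = 0` these are the partial
isomorphisms. -/
structure IsPartialIso (L : FirstOrder.Language) {M N : Type*} [L.Structure M] [L.Structure N]
    (ρ : ℕ) (Z : SetRel M N) : Prop where
  distLE_iff : ∀ {x x' y y'}, (x, x') ∈ Z → (y, y') ∈ Z → ∀ {r}, r ≤ ρ →
    (distLE L M r x y ↔ distLE L N r x' y')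
  relMap_iff : ∀ {n} (R : L.Relations n) {ts : Fin n → M} {ts' : Fin n → N},
    (∀ i, (ts i, ts' i) ∈ Z) → (Structure.RelMap R ts ↔ Structure.RelMap R ts')

/-- Duplicator wins the `q`-round Ehrenfeucht–Fraïssé game from the position `Z` when moves are
restricted to `S` on the left and `S'` on the right, and all positions must preserve Gaifman
distances up to `ρ`. -/
def EFEquiv (L : FirstOrder.Language) {M N : Type*} [L.Structure M] [L.Structure N] (ρ : ℕ)
    (S : Set M) (S' : Set N) : ℕ → SetRel M N → Prop
  | 0, Z => IsPartialIso L ρ Z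
  | q + 1, Z => IsPartialIso L ρ Z ∧
      (∀ c ∈ S, ∃ c' ∈ S', EFEquiv L ρ S S' q (insert (c, c') Z)) ∧
      ∀ c' ∈ S', ∃ c ∈ S, EFEquiv L ρ S S' q (insert (c, c') Z)

theorem fst_image_inv {α β : Type*} (Z : SetRel α β) : Prod.fst '' Z.inv = Prod.snd '' Z := by
  ext
  simp

theorem snd_image_inv {α β : Type*} (Z : SetRel α β) : Prod.snd '' Z.inv = Prod.fst '' Z := by
  ext
  simp

theorem inv_insert {α β : Type*} (p : α × β) (Z : SetRel α β) :
    SetRel.inv (insert p Z) = insert p.swap Z.inv := by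
  ext ⟨x, y⟩
  simp [Prod.ext_iff, and_comm]

namespace IsPartialIso

variable {ρ : ℕ} {Z W : SetRel M N}

theorem eq_iff (h : IsPartialIso L ρ Z) {x x' y y'} (hx : (x, x') ∈ Z) (hy : (y, y') ∈ Z) :
    x = y ↔ x' = y' :=
  h.distLE_iff hx hy (Nat.zero_le ρ)

theorem mono {σ : ℕ} (h : IsPartialIso L ρ Z) (hσ : σ ≤ ρ) (hW : W ⊆ Z) : IsPartialIso L σ W where
  distLE_iff hx hy _ hr := h.distLE_iff (hW hx) (hW hy) (hr.trans hσ)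
  relMap_iff R _ _ ht := h.relMap_iff R fun i => hW (ht i)

theorem inv (h : IsPartialIso L ρ Z) : IsPartialIso L ρ Z.inv where
  distLE_iff hx hy _ hr := (h.distLE_iff hx hy hr).symm
  relMap_iff R _ _ ht := (h.relMap_iff R ht).symm

theorem comp {V : SetRel N P} (h : IsPartialIso L ρ Z) (h' : IsPartialIso L ρ V) :
    IsPartialIso L ρ (Z.comp V) where
  distLE_iff := by
    rintro x x' y y' ⟨u, hu, hu'⟩ ⟨v, hv, hv'⟩ r hr
    exact (h.distLE_iff hu hv hr).trans (h'.distLE_iff hu' hv' hr)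
  relMap_iff R t t' ht := by
    choose s hs hs' using ht
    exact (h.relMap_iff R hs).trans (h'.relMap_iff R hs')

theorem id (ρ : ℕ) : IsPartialIso L ρ (SetRel.id : SetRel M M) where
  distLE_iff := by
    rintro x _ y _ rfl rfl r -
    rfl
  relMap_iff R t t' ht := by rw [show t = t' from funext ht]

theorem isScattered_iff (h : IsPartialIso L ρ Z) {r : ℕ} (hr : r ≤ ρ) {ι : Type*} {s : ι → M}
    {t : ι → N} (hst : ∀ i, (s i, t i) ∈ Z) : IsScattered L r s ↔ IsScattered L r t :=
  forall₃_congr fun i j _ => not_congr (h.distLE_iff (hst i) (hst j) hr)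

theorem mem_gaifmanNbhd_iff (h : IsPartialIso L ρ W) {r : ℕ} (hr : r ≤ ρ) (hZ : Z ⊆ W)
    {c : M} {c' : N} (hc : (c, c') ∈ W) :
    c ∈ gaifmanNbhd L r (Prod.fst '' Z) ↔ c' ∈ gaifmanNbhd L r (Prod.snd '' Z) := by
  constructor
  · rintro ⟨_, ⟨z, hz, rfl⟩, hzc⟩
    exact ⟨z.2, ⟨z, hz, rfl⟩, (h.distLE_iff (hZ hz) hc hr).1 hzc⟩
  · rintro ⟨_, ⟨z, hz, rfl⟩, hzc⟩
    exact ⟨z.1, ⟨z, hz, rfl⟩, (h.distLE_iff (hZ hz) hc hr).2 hzc⟩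

theorem relMap_of_union {S₁ S₂ : Set M} {S₁' S₂' : Set N} {Z₁ Z₂ : SetRel M N} (hρ : 1 ≤ ρ)
    (h₁ : IsPartialIso L ρ Z₁) (h₂ : IsPartialIso L ρ Z₂) (hZ₁ : Z₁ ⊆ S₁ ×ˢ S₁')
    (hZ₂ : Z₂ ⊆ S₂ ×ˢ S₂') (hfar : Disjoint (gaifmanNbhd L ρ S₁) S₂)
    {n : ℕ} (R : L.Relations n) {t : Fin n → M} {t' : Fin n → N}
    (ht : ∀ i, (t i, t' i) ∈ Z₁ ∪ Z₂) (hR : Structure.RelMap R t) : Structure.RelMap R t' := by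
  by_cases hleft : ∀ i, (t i, t' i) ∈ Z₁
  · exact (h₁.relMap_iff R hleft).1 hR
  · obtain ⟨i, hi⟩ := not_forall.1 hleft
    refine (h₂.relMap_iff R fun j => (ht j).resolve_left fun hj => ?_).1 hR
    exact disjoint_gaifmanNbhd_left.1 hfar _ (hZ₁ hj).1 _ (hZ₂ ((ht i).resolve_left hi)).1
      (distLE_mono hρ (distLE_one_of_relMap hR j i))

theorem union {S₁ S₂ : Set M} {S₁' S₂' : Set N} {Z₁ Z₂ : SetRel M N} (hρ : 1 ≤ ρ)
    (h₁ : IsPartialIso L ρ Z₁) (h₂ : IsPartialIso L ρ Z₂) (hZ₁ : Z₁ ⊆ S₁ ×ˢ S₁')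
    (hZ₂ : Z₂ ⊆ S₂ ×ˢ S₂') (hfar : Disjoint (gaifmanNbhd L ρ S₁) S₂)
    (hfar' : Disjoint (gaifmanNbhd L ρ S₁') S₂') : IsPartialIso L ρ (Z₁ ∪ Z₂) where
  distLE_iff := by
    have hcross : ∀ {x x' y y'}, (x, x') ∈ Z₁ → (y, y') ∈ Z₂ → ∀ {r}, r ≤ ρ →
        (distLE L M r x y ↔ distLE L N r x' y') := fun hx hy _ hr => iff_of_false
      (fun h => disjoint_gaifmanNbhd_left.1 hfar _ (hZ₁ hx).1 _ (hZ₂ hy).1 (distLE_mono hr h))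
      fun h => disjoint_gaifmanNbhd_left.1 hfar' _ (hZ₁ hx).2 _ (hZ₂ hy).2 (distLE_mono hr h)
    rintro x x' y y' (hx | hx) (hy | hy) r hr
    · exact h₁.distLE_iff hx hy hr
    · exact hcross hx hy hr
    · rw [distLE_comm, hcross hy hx hr, distLE_comm]
    · exact h₂.distLE_iff hx hy hr
  relMap_iff R _ _ ht := ⟨relMap_of_union hρ h₁ h₂ hZ₁ hZ₂ hfar R ht,
    relMap_of_union hρ h₁.inv h₂.inv (fun _ hz => (hZ₁ hz).symm) (fun _ hz => (hZ₂ hz).symm) hfar' R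
      ht⟩

end IsPartialIso

namespace EFEquiv

variable {ρ q : ℕ} {S : Set M} {S' : Set N} {Z : SetRel M N}

theorem isPartialIso (h : EFEquiv L ρ S S' q Z) : IsPartialIso L ρ Z := by
  cases q with
  | zero => exact h
  | succ q => exact h.1

theorem mono {ρ' q' : ℕ} {W : SetRel M N} (h : EFEquiv L ρ S S' q Z) (hρ : ρ' ≤ ρ) (hq : q' ≤ q)
    (hW : W ⊆ Z) : EFEquiv L ρ' S S' q' W := by
  induction q' generalizing q Z W with
  | zero => exact h.isPartialIso.mono hρ hW
  | succ q' ih =>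
    obtain ⟨q, rfl⟩ := Nat.exists_eq_add_of_lt hq
    refine ⟨h.isPartialIso.mono hρ hW, fun c hc => ?_, fun c' hc' => ?_⟩
    · obtain ⟨c', hc', h'⟩ := h.2.1 c hc
      exact ⟨c', hc', ih h' (by omega) (Set.insert_subset_insert hW)⟩
    · obtain ⟨c, hc, h'⟩ := h.2.2 c' hc'
      exact ⟨c, hc, ih h' (by omega) (Set.insert_subset_insert hW)⟩

theorem inv (h : EFEquiv L ρ S S' q Z) : EFEquiv L ρ S' S q Z.inv := by
  induction q generalizing Z with
  | zero => exact IsPartialIso.inv h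
  | succ q ih =>
    refine ⟨h.1.inv, fun c' hc' => ?_, fun c hc => ?_⟩
    · obtain ⟨c, hc, h'⟩ := h.2.2 c' hc'
      exact ⟨c, hc, inv_insert (c, c') Z ▸ ih h'⟩
    · obtain ⟨c', hc', h'⟩ := h.2.1 c hc
      exact ⟨c', hc', inv_insert (c, c') Z ▸ ih h'⟩

theorem comp {S'' : Set P} {V : SetRel N P} (h : EFEquiv L ρ S S' q Z)
    (h' : EFEquiv L ρ S' S'' q V) : EFEquiv L ρ S S'' q (Z.comp V) := by
  have insert_comp_subset : ∀ {Z : SetRel M N} {V : SetRel N P} c d e,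
      insert (c, e) (Z.comp V) ⊆ SetRel.comp (insert (c, d) Z) (insert (d, e) V) := by
    rintro Z V c d e _ (rfl | ⟨d', hcd, hde⟩)
    · exact ⟨d, Or.inl rfl, Or.inl rfl⟩
    · exact ⟨d', Or.inr hcd, Or.inr hde⟩
  induction q generalizing Z V with
  | zero => exact IsPartialIso.comp h h'
  | succ q ih =>
    refine ⟨h.1.comp h'.1, fun c hc => ?_, fun e he => ?_⟩
    · obtain ⟨d, hd, hcd⟩ := h.2.1 c hc
      obtain ⟨e, he, hde⟩ := h'.2.1 d hd
      exact ⟨e, he, (ih hcd hde).mono le_rfl le_rfl (insert_comp_subset c d e)⟩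
    · obtain ⟨d, hd, hde⟩ := h'.2.2 e he
      obtain ⟨c, hc, hcd⟩ := h.2.2 d hd
      exact ⟨c, hc, (ih hcd hde).mono le_rfl le_rfl (insert_comp_subset c d e)⟩

theorem id (ρ q : ℕ) (S : Set M) : EFEquiv L ρ S S q SetRel.id := by
  induction q with
  | zero => exact IsPartialIso.id ρ
  | succ q ih =>
    have hins : ∀ c : M, insert (c, c) SetRel.id = SetRel.id := fun c => Set.insert_eq_of_mem rfl
    exact ⟨IsPartialIso.id ρ, fun c hc => ⟨c, hc, (hins c).symm ▸ ih⟩,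
      fun c hc => ⟨c, hc, (hins c).symm ▸ ih⟩⟩

theorem exists_tuple {n : ℕ} (h : EFEquiv L ρ S S' (q + n) Z) (t : Fin n → M)
    (ht : ∀ i, t i ∈ S) :
    ∃ t' : Fin n → N, EFEquiv L ρ S S' q (Z ∪ Set.range fun i => (t i, t' i)) := by
  induction n generalizing Z with
  | zero => exact ⟨finZeroElim, h.mono le_rfl le_rfl (by simp)⟩
  | succ n ih =>
    obtain ⟨c', -, h'⟩ := h.2.1 (t 0) (ht 0)
    obtain ⟨t', h''⟩ := ih h' (Fin.tail t) fun i => ht i.succ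
    refine ⟨Fin.cons c' t', h''.mono le_rfl le_rfl ?_⟩
    rintro _ (hp | ⟨i, rfl⟩)
    · exact Or.inl (Or.inr hp)
    · cases i using Fin.cases with
      | zero => exact Or.inl (Or.inl rfl)
      | succ i => exact Or.inr ⟨i, rfl⟩

theorem restrict {T : Set M} {T' : Set N} {σ p : ℕ} (h : EFEquiv L σ S S' (q + p) Z)
    (hT : T ⊆ S) (hT' : T' ⊆ S') (hZ : Z ⊆ T ×ˢ T')
    (hmem : ∀ W, Z ⊆ W → EFEquiv L σ S S' p W → ∀ {c c'}, (c, c') ∈ W → (c ∈ T ↔ c' ∈ T'))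
    (hiso : ∀ W ⊆ T ×ˢ T', EFEquiv L σ S S' p W → IsPartialIso L ρ W) :
    EFEquiv L ρ T T' q Z := by
  induction q generalizing Z with
  | zero => exact hiso Z hZ (h.mono le_rfl (by omega) subset_rfl)
  | succ q ih =>
    rw [Nat.add_right_comm] at h
    have hstep : ∀ {c c'}, EFEquiv L σ S S' (q + p) (insert (c, c') Z) →
        (c ∈ T ↔ c' ∈ T') ∧ (c ∈ T → EFEquiv L ρ T T' q (insert (c, c') Z)) := by
      intro c c' h'
      have hcc' := hmem _ (Set.subset_insert _ _) (h'.mono le_rfl (by omega) subset_rfl)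
        (Set.mem_insert (c, c') Z)
      exact ⟨hcc', fun hc => ih h' (Set.insert_subset ⟨hc, hcc'.1 hc⟩ hZ)
        fun W hW => hmem W ((Set.subset_insert _ _).trans hW)⟩
    refine ⟨hiso Z hZ (h.mono le_rfl (by omega) subset_rfl), fun c hc => ?_, fun c' hc' => ?_⟩
    · obtain ⟨c', -, h'⟩ := h.2.1 c (hT hc)
      exact ⟨c', (hstep h').1.1 hc, (hstep h').2 hc⟩
    · obtain ⟨c, -, h'⟩ := h.2.2 c' (hT' hc')
      have hc := (hstep h').1.2 hc'
      exact ⟨c, hc, (hstep h').2 hc⟩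

theorem union {S₁ S₂ : Set M} {S₁' S₂' : Set N} {Z₁ Z₂ : SetRel M N} (hρ : 1 ≤ ρ)
    (h₁ : EFEquiv L ρ S₁ S₁' q Z₁) (h₂ : EFEquiv L ρ S₂ S₂' q Z₂)
    (hfar : Disjoint (gaifmanNbhd L ρ S₁) S₂) (hfar' : Disjoint (gaifmanNbhd L ρ S₁') S₂')
    (hZ₁ : Z₁ ⊆ S₁ ×ˢ S₁') (hZ₂ : Z₂ ⊆ S₂ ×ˢ S₂') :
    EFEquiv L ρ (S₁ ∪ S₂) (S₁' ∪ S₂') q (Z₁ ∪ Z₂) := by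
  induction q generalizing Z₁ Z₂ with
  | zero => exact IsPartialIso.union hρ h₁ h₂ hZ₁ hZ₂ hfar hfar'
  | succ q ih =>
    have hleft : ∀ {c c'}, c ∈ S₁ → c' ∈ S₁' → EFEquiv L ρ S₁ S₁' q (insert (c, c') Z₁) →
        EFEquiv L ρ (S₁ ∪ S₂) (S₁' ∪ S₂') q (insert (c, c') (Z₁ ∪ Z₂)) := fun hc hc' h =>
      Set.insert_union ▸ ih h (h₂.mono le_rfl q.le_succ subset_rfl)
        (Set.insert_subset ⟨hc, hc'⟩ hZ₁) hZ₂
    have hright : ∀ {c c'}, c ∈ S₂ → c' ∈ S₂' → EFEquiv L ρ S₂ S₂' q (insert (c, c') Z₂) →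
        EFEquiv L ρ (S₁ ∪ S₂) (S₁' ∪ S₂') q (insert (c, c') (Z₁ ∪ Z₂)) := fun hc hc' h =>
      Set.union_insert ▸ ih (h₁.mono le_rfl q.le_succ subset_rfl) h hZ₁
        (Set.insert_subset ⟨hc, hc'⟩ hZ₂)
    refine ⟨h₁.1.union hρ h₂.1 hZ₁ hZ₂ hfar hfar', ?_, ?_⟩
    · rintro c (hc | hc)
      · obtain ⟨c', hc', h⟩ := h₁.2.1 c hc
        exact ⟨c', Or.inl hc', hleft hc hc' h⟩
      · obtain ⟨c', hc', h⟩ := h₂.2.1 c hc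
        exact ⟨c', Or.inr hc', hright hc hc' h⟩
    · rintro c' (hc' | hc')
      · obtain ⟨c, hc, h⟩ := h₁.2.2 c' hc'
        exact ⟨c, Or.inl hc, hleft hc hc' h⟩
      · obtain ⟨c, hc, h⟩ := h₂.2.2 c' hc'
        exact ⟨c, Or.inr hc, hright hc hc' h⟩

theorem realize_iff [L.IsRelational] {α : Type*} {n : ℕ} (φ : L.BoundedFormula α n)
    (hq : qRank φ ≤ q) (h : EFEquiv L ρ Set.univ Set.univ q Z) {v : α → M} {v' : α → N}
    {xs : Fin n → M} {xs' : Fin n → N} (hv : ∀ i, (v i, v' i) ∈ Z)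
    (hxs : ∀ i, (xs i, xs' i) ∈ Z) : φ.Realize v xs ↔ φ.Realize v' xs' := by
  have hterm : ∀ {n : ℕ} {xs : Fin n → M} {xs' : Fin n → N} {Z : SetRel M N},
      (∀ i, (v i, v' i) ∈ Z) → (∀ i, (xs i, xs' i) ∈ Z) → ∀ t : L.Term (α ⊕ Fin n),
      (t.realize (Sum.elim v xs), t.realize (Sum.elim v' xs')) ∈ Z := by
    intro n xs xs' Z hv hxs t
    cases t with
    | var i => exact Sum.casesOn i hv hxs
    | func f _ => exact isEmptyElim f
  induction φ generalizing q Z with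
  | falsum => rfl
  | equal t₁ t₂ => exact h.isPartialIso.eq_iff (hterm hv hxs t₁) (hterm hv hxs t₂)
  | rel R ts => exact h.isPartialIso.relMap_iff R fun i => hterm hv hxs (ts i)
  | imp f g ihf ihg =>
    rw [qRank, max_le_iff] at hq
    exact imp_congr (ihf hq.1 h hv hxs) (ihg hq.2 h hv hxs)
  | all f ih =>
    rw [qRank] at hq
    obtain ⟨q, rfl⟩ := Nat.exists_eq_add_of_lt hq
    have hstep : ∀ c c', EFEquiv L ρ Set.univ Set.univ (qRank f + q) (insert (c, c') Z) →
        (f.Realize v (Fin.snoc xs c) ↔ f.Realize v' (Fin.snoc xs' c')) := by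
      refine fun c c' h' => ih (Nat.le_add_right _ _) h' (fun i => Or.inr (hv i)) fun i => ?_
      cases i using Fin.lastCases with
      | last => simp
      | cast i => simpa using Or.inr (hxs i)
    refine ⟨fun H c' => ?_, fun H c => ?_⟩
    · obtain ⟨c, -, h'⟩ := h.2.2 c' trivial
      exact (hstep c c' h').1 (H c)
    · obtain ⟨c', -, h'⟩ := h.2.1 c trivial
      exact (hstep c c' h').2 (H c')

section ArityBound

variable {A : ℕ}

theorem distLE_of_distLE (hA : ∀ n, L.Relations n → n ≤ A) {r : ℕ} (hq : r * A ≤ q)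
    (h : EFEquiv L ρ S S' q Z) {x x' y y'} (hx : (x, x') ∈ Z) (hy : (y, y') ∈ Z)
    (hS : gaifmanNbhd L r {x} ⊆ S) (hxy : distLE L M r x y) : distLE L N r x' y' := by
  induction r generalizing q Z x x' with
  | zero => exact (h.isPartialIso.eq_iff hx hy).1 hxy
  | succ r ih =>
    rcases hxy with rfl | ⟨_, ⟨-, n, R, t, hR, ⟨i, rfl⟩, ⟨j, rfl⟩⟩, hcy⟩
    · exact Or.inl ((h.isPartialIso.eq_iff hx hy).1 rfl)
    -- An edge is transferred by playing all entries of a tuple that witnesses it, hence `A` moves.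
    · have hq' : r * A + n ≤ q := (Nat.add_le_add_left (hA n R) _).trans (Nat.succ_mul r A ▸ hq)
      have hdist : ∀ k, t k ∈ gaifmanNbhd L 1 {t i} := fun k =>
        ⟨t i, rfl, distLE_one_of_relMap hR i k⟩
      obtain ⟨t', h'⟩ := (h.mono le_rfl hq' subset_rfl).exists_tuple t fun k =>
        hS (gaifmanNbhd_mono (Nat.succ_le_succ r.zero_le) subset_rfl (hdist k))
      have ht : ∀ k, (t k, t' k) ∈ Z ∪ Set.range fun i => (t i, t' i) := fun k => Or.inr ⟨k, rfl⟩
      obtain rfl : t' i = x' := (h'.isPartialIso.eq_iff (ht i) (Or.inl hx)).1 rfl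
      have hR' := (h'.isPartialIso.relMap_iff R ht).1 hR
      have hS' : gaifmanNbhd L r {t j} ⊆ S := (gaifmanNbhd_subset_gaifmanNbhd
        (Set.singleton_subset_iff.2 (hdist j)) (Nat.add_comm 1 r).le).trans hS
      exact distLE_mono (Nat.add_comm 1 r).le (distLE_trans (distLE_one_of_relMap hR' i j)
        (ih le_rfl h' (ht j) (Or.inl hy) hS' hcy))

theorem distLE_iff (hA : ∀ n, L.Relations n → n ≤ A) {r : ℕ} (hq : r * A ≤ q)
    (h : EFEquiv L ρ S S' q Z) {x x' y y'} (hx : (x, x') ∈ Z) (hy : (y, y') ∈ Z)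
    (hS : gaifmanNbhd L r {x} ⊆ S) (hS' : gaifmanNbhd L r {x'} ⊆ S') :
    distLE L M r x y ↔ distLE L N r x' y' :=
  ⟨h.distLE_of_distLE hA hq hx hy hS, h.inv.distLE_of_distLE hA hq hx hy hS'⟩

end ArityBound

end EFEquiv

/-- Local equivalence of the two sides of the position `Z`: duplicator wins the `q`-round
distance-preserving game played on their `r`-neighbourhoods. -/
def LocalEquiv (L : FirstOrder.Language) {M N : Type*} [L.Structure M] [L.Structure N] (r q : ℕ)
    (Z : SetRel M N) : Prop :=
  EFEquiv L r (gaifmanNbhd L r (Prod.fst '' Z)) (gaifmanNbhd L r (Prod.snd '' Z)) q Z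

theorem subset_gaifmanNbhd_prod (r : ℕ) (Z : SetRel M N) :
    Z ⊆ gaifmanNbhd L r (Prod.fst '' Z) ×ˢ gaifmanNbhd L r (Prod.snd '' Z) := fun z hz =>
  ⟨subset_gaifmanNbhd r _ ⟨z, hz, rfl⟩, subset_gaifmanNbhd r _ ⟨z, hz, rfl⟩⟩

namespace EFEquiv

variable {q r : ℕ} {S : Set M} {S' : Set N} {Z : SetRel M N}

theorem localEquiv {ρ : ℕ} (h : EFEquiv L ρ S S' q Z) (hr : r ≤ ρ)
    (hS : gaifmanNbhd L r (Prod.fst '' Z) ⊆ S) (hS' : gaifmanNbhd L r (Prod.snd '' Z) ⊆ S') :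
    LocalEquiv L r q Z :=
  restrict (p := 0) h hS hS' (subset_gaifmanNbhd_prod r Z)
    (fun _ hZW hW _ _ hc => hW.isPartialIso.mem_gaifmanNbhd_iff hr hZW hc)
    fun _ _ hW => hW.isPartialIso.mono hr subset_rfl

theorem localEquiv_of_arity_le {A : ℕ} (hA : ∀ n, L.Relations n → n ≤ A)
    (h : EFEquiv L 0 S S' (q + r * A) Z) (hS : gaifmanNbhd L (r + r) (Prod.fst '' Z) ⊆ S)
    (hS' : gaifmanNbhd L (r + r) (Prod.snd '' Z) ⊆ S') : LocalEquiv L r q Z := by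
  have hdist : ∀ W, EFEquiv L 0 S S' (r * A) W → ∀ {x x' y y'}, (x, x') ∈ W → (y, y') ∈ W →
      x ∈ gaifmanNbhd L r (Prod.fst '' Z) → x' ∈ gaifmanNbhd L r (Prod.snd '' Z) → ∀ {s}, s ≤ r →
      (distLE L M s x y ↔ distLE L N s x' y') := fun W hW _ _ _ _ hx hy hxZ hxZ' s hs =>
    hW.distLE_iff hA (Nat.mul_le_mul_right A hs) hx hy
      ((gaifmanNbhd_subset_gaifmanNbhd (Set.singleton_subset_iff.2 hxZ) (by omega)).trans hS)
      ((gaifmanNbhd_subset_gaifmanNbhd (Set.singleton_subset_iff.2 hxZ') (by omega)).trans hS')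
  refine h.restrict ((gaifmanNbhd_mono (by omega) subset_rfl).trans hS)
    ((gaifmanNbhd_mono (by omega) subset_rfl).trans hS') (subset_gaifmanNbhd_prod r Z)
    (fun W hZW hW c c' hc => ?_) fun W hWT hW => ?_
  · have hzc : ∀ z ∈ Z, (distLE L M r z.1 c ↔ distLE L N r z.2 c') := fun z hz =>
      hdist W hW (hZW hz) hc (subset_gaifmanNbhd_prod r Z hz).1 (subset_gaifmanNbhd_prod r Z hz).2
        le_rfl
    simp only [gaifmanNbhd, Set.exists_mem_image, Set.mem_ofPred_eq]
    exact exists_congr fun z => and_congr_right (hzc z)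
  · exact ⟨fun hx hy _ hs => hdist W hW hx hy (hWT hx).1 (hWT hx).2 hs,
      hW.isPartialIso.relMap_iff⟩

end EFEquiv

namespace LocalEquiv

variable {r q : ℕ} {Z : SetRel M N}

theorem inv (h : LocalEquiv L r q Z) : LocalEquiv L r q Z.inv := by
  rw [LocalEquiv, fst_image_inv, snd_image_inv]
  exact EFEquiv.inv h

theorem union {Z₁ Z₂ : SetRel M N} (hr : 1 ≤ r) (h₁ : LocalEquiv L r q Z₁)
    (h₂ : LocalEquiv L r q Z₂)
    (hfar : Disjoint (gaifmanNbhd L (3 * r) (Prod.fst '' Z₁)) (Prod.fst '' Z₂))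
    (hfar' : Disjoint (gaifmanNbhd L (3 * r) (Prod.snd '' Z₁)) (Prod.snd '' Z₂)) :
    LocalEquiv L r q (Z₁ ∪ Z₂) := by
  rw [LocalEquiv, Set.image_union, Set.image_union, gaifmanNbhd_union, gaifmanNbhd_union]
  have hsum : r + 2 * r ≤ 3 * r := by omega
  exact EFEquiv.union hr h₁ h₂
    (disjoint_gaifmanNbhd_gaifmanNbhd (Nat.two_mul r).ge
      (hfar.mono_left (gaifmanNbhd_subset_gaifmanNbhd subset_rfl hsum)))
    (disjoint_gaifmanNbhd_gaifmanNbhd (Nat.two_mul r).ge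
      (hfar'.mono_left (gaifmanNbhd_subset_gaifmanNbhd subset_rfl hsum)))
    (subset_gaifmanNbhd_prod r Z₁) (subset_gaifmanNbhd_prod r Z₂)

theorem of_subset_id {Z : SetRel M M} (hZ : Z ⊆ SetRel.id) : LocalEquiv L r q Z := by
  have hfst : Prod.fst '' Z = Prod.snd '' Z := Set.image_congr fun _ hz => hZ hz
  rw [LocalEquiv, hfst]
  exact (EFEquiv.id r q _).mono le_rfl le_rfl hZ

theorem trans {a : M} {b : N} {c : P} (hab : LocalEquiv L r q {(a, b)})
    (hbc : LocalEquiv L r q {(b, c)}) : LocalEquiv L r q {(a, c)} := by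
  simp only [LocalEquiv, Set.image_singleton] at *
  refine (hab.comp hbc).mono le_rfl le_rfl (Set.singleton_subset_iff.2 ?_)
  exact ⟨b, rfl, rfl⟩

end LocalEquiv

end Game

section BackAndForth

variable {L : FirstOrder.Language} {B : Type*} [L.Structure B]

namespace LocalEquiv

variable {r q n : ℕ} {Z : SetRel B B}

theorem exists_scattered_succ (h : LocalEquiv L (10 * r) (q + n) Z) {c : B}
    (hc : c ∉ gaifmanNbhd L (9 * r) (Prod.fst '' Z)) {s : Fin n → B}
    (hsZ : ∀ i, s i ∈ gaifmanNbhd L (3 * r) (Prod.snd '' Z))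
    (hcs : ∀ i, LocalEquiv L r q {(c, s i)})
    (hs : IsScattered L (6 * r) s) :
    ∃ s' : Fin (n + 1) → B, (∀ i, LocalEquiv L r q {(c, s' i)}) ∧ IsScattered L (6 * r) s' := by
  obtain ⟨t, ht⟩ := EFEquiv.exists_tuple h.inv s fun i => by
    rw [fst_image_inv]
    exact gaifmanNbhd_mono (by omega) subset_rfl (hsZ i)
  simp only [fst_image_inv, snd_image_inv] at ht
  have hmem : ∀ i, (s i, t i) ∈ Z.inv ∪ Set.range fun i => (s i, t i) := fun i => Or.inr ⟨i, rfl⟩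
  have htZ : ∀ i, t i ∈ gaifmanNbhd L (3 * r) (Prod.fst '' Z) := fun i => by
    have := ht.isPartialIso.mem_gaifmanNbhd_iff (r := 3 * r) (by omega) Set.subset_union_left
      (hmem i)
    rw [fst_image_inv, snd_image_inv] at this
    exact this.1 (hsZ i)
  have hst : ∀ i, LocalEquiv L r q {(s i, t i)} := fun i => by
    refine (ht.mono le_rfl le_rfl (Set.singleton_subset_iff.2 (hmem i))).localEquiv (by omega) ?_ ?_
      <;> rw [Set.image_singleton] <;>
      refine gaifmanNbhd_subset_gaifmanNbhd (s := 3 * r) (Set.singleton_subset_iff.2 ?_) (by omega)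
    exacts [hsZ i, htZ i]
  have hct : ∀ i, ¬ distLE L B (6 * r) (t i) c := fun i hct => hc <|
    gaifmanNbhd_subset_gaifmanNbhd (Set.singleton_subset_iff.2 (htZ i)) (by omega) ⟨t i, rfl, hct⟩
  have hts : IsScattered L (6 * r) t := (ht.isPartialIso.isScattered_iff (by omega) hmem).1 hs
  refine ⟨Fin.cons c t, fun i => ?_, hts.cons hct⟩
  cases i using Fin.cases with
  | zero => exact of_subset_id (Set.singleton_subset_iff.2 rfl)
  | succ i => exact (hcs i).trans (hst i)

theorem exists_far (h : LocalEquiv L (10 * r) (q + n) Z) (hZ : Z.encard ≤ n) {c : B}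
    (hc : c ∉ gaifmanNbhd L (9 * r) (Prod.fst '' Z)) :
    ∃ c' ∉ gaifmanNbhd L (3 * r) (Prod.snd '' Z), LocalEquiv L r q {(c, c')} := by
  by_contra! hnear
  have hscattered : ∀ j ≤ n + 1, ∃ s : Fin j → B,
      (∀ i, LocalEquiv L r q {(c, s i)}) ∧ IsScattered L (6 * r) s := by
    intro j hj
    induction j with
    | zero => exact ⟨finZeroElim, fun i => i.elim0, fun i => i.elim0⟩
    | succ j ih =>
      obtain ⟨s, hcs, hs⟩ := ih (by omega)
      have h : LocalEquiv L (10 * r) (q + j) Z := h.mono le_rfl (by omega) subset_rfl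
      exact h.exists_scattered_succ hc (fun i => by_contra fun hi => hnear _ hi (hcs i)) hcs hs
  obtain ⟨s, hcs, hs⟩ := hscattered (n + 1) le_rfl
  refine not_isScattered_of_encard_le ((Set.encard_image_le Prod.snd Z).trans hZ)
    (fun i => by_contra fun hi => hnear (s i) hi (hcs i)) ?_
  rwa [← two_mul, ← mul_assoc]

theorem exists_forth (hr : 1 ≤ r) (h : LocalEquiv L (10 * r) (q + n + 1) Z) (hZ : Z.encard ≤ n)
    (c : B) : ∃ c', LocalEquiv L r q (insert (c, c') Z) := by
  by_cases hc : c ∈ gaifmanNbhd L (9 * r) (Prod.fst '' Z)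
  · obtain ⟨c', -, h'⟩ := h.2.1 c (gaifmanNbhd_mono (by omega) subset_rfl hc)
    have hc' : c' ∈ gaifmanNbhd L (9 * r) (Prod.snd '' Z) :=
      (h'.isPartialIso.mem_gaifmanNbhd_iff (by omega) (Set.subset_insert _ _) (Or.inl rfl)).1 hc
    refine ⟨c', (h'.mono le_rfl (by omega) subset_rfl).localEquiv (by omega) ?_ ?_⟩ <;>
      rw [Set.image_insert_eq] <;>
      refine gaifmanNbhd_subset_gaifmanNbhd (s := 9 * r)
        (Set.insert_subset ?_ (subset_gaifmanNbhd _ _)) (by omega)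
    exacts [hc, hc']
  · obtain ⟨c', hc', hcc'⟩ :=
      exists_far (n := n) (EFEquiv.mono h le_rfl (Nat.le_succ _) subset_rfl) hZ hc
    have hZr : LocalEquiv L r q Z := (EFEquiv.mono h le_rfl (by omega) subset_rfl).localEquiv
      (by omega) (gaifmanNbhd_mono (by omega) subset_rfl) (gaifmanNbhd_mono (by omega) subset_rfl)
    refine ⟨c', Set.union_singleton ▸ hZr.union hr hcc' ?_ ?_⟩ <;>
      rw [Set.image_singleton, Set.disjoint_singleton_right]
    exacts [fun h => hc (gaifmanNbhd_mono (by omega) subset_rfl h), hc']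

theorem efEquiv_univ (hZ : Z.encard ≤ n) (h : LocalEquiv L (10 ^ q) (q * (n + q)) Z) :
    EFEquiv L 0 Set.univ Set.univ q Z := by
  induction q generalizing n Z with
  | zero => exact h.isPartialIso.mono (Nat.zero_le _) subset_rfl
  | succ q ih =>
    have hforth : ∀ {Z : SetRel B B}, Z.encard ≤ n →
        LocalEquiv L (10 ^ (q + 1)) ((q + 1) * (n + (q + 1))) Z →
        ∀ c, ∃ c', EFEquiv L 0 Set.univ Set.univ q (insert (c, c') Z) := fun {Z} hZ h c => by
      rw [pow_succ'] at h
      have h : LocalEquiv L (10 * 10 ^ q) (q * (n + 1 + q) + n + 1) Z :=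
        h.mono le_rfl (by linarith) subset_rfl
      obtain ⟨c', hc'⟩ := h.exists_forth (Nat.one_le_pow _ _ (by norm_num)) hZ c
      refine ⟨c', ih (n := n + 1) ?_ hc'⟩
      exact (Set.encard_insert_le _ _).trans (by exact_mod_cast add_le_add_left hZ 1)
    have hZinv : Set.encard Z.inv ≤ n := by
      rwa [SetRel.inv, Set.encard_preimage_of_bijective Prod.swap_bijective]
    refine ⟨h.isPartialIso.mono (Nat.zero_le _) subset_rfl, fun c _ => ?_, fun c' _ => ?_⟩
    · obtain ⟨c', h'⟩ := hforth hZ h c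
      exact ⟨c', trivial, h'⟩
    · obtain ⟨c, h'⟩ := hforth hZinv h.inv c'
      exact ⟨c, trivial, inv_insert (c', c) Z.inv ▸ h'.inv⟩

end LocalEquiv

end BackAndForth

section LocalTypes

universe u v

variable {L : FirstOrder.Language.{u, v}}

/-- The atomic formulas in the variables `ι`: the equations between two variables, and the
relation symbols applied to a tuple of variables. -/
abbrev Atom (L : FirstOrder.Language.{u, v}) (ι : Type) : Type v :=
  ι × ι ⊕ Σ R : (Σ n, L.Relations n), (Fin R.1 → ι)

/-- Truth of an atomic formula under an assignment of the variables. -/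
def Atom.Holds {ι : Type} {M : Type*} [L.Structure M] (x : ι → M) : Atom L ι → Prop
  | .inl (i, j) => x i = x j
  | .inr ⟨R, f⟩ => Structure.RelMap R.2 (x ∘ f)

theorem isPartialIso_range {ι : Type} {M N : Type*} [L.Structure M] [L.Structure N] {x : ι → M}
    {x' : ι → N} (h : ∀ α : Atom L ι, α.Holds x ↔ α.Holds x') :
    IsPartialIso L 0 (Set.range fun i => (x i, x' i)) where
  distLE_iff := by
    rintro _ _ _ _ ⟨i, ⟨⟩⟩ ⟨j, ⟨⟩⟩ r hr
    rw [Nat.le_zero.1 hr]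
    exact h (.inl (i, j))
  relMap_iff R t t' ht := by
    choose f hf using ht
    obtain rfl : x ∘ f = t := funext fun i => congrArg Prod.fst (hf i)
    obtain rfl : x' ∘ f = t' := funext fun i => congrArg Prod.snd (hf i)
    exact h (.inr ⟨⟨_, R⟩, f⟩)

/-- The possible Hintikka types of rank `q` of a `K`-tuple of centres and an `n`-tuple of moves:
which atomic formulas hold, and, for `q > 0`, which types of rank `q - 1` are realised by a
further move. -/
def HintikkaType (L : FirstOrder.Language.{u, v}) (K : ℕ) : ℕ → ℕ → Type v
  | 0, n => Set (Atom L (Fin K ⊕ Fin n))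
  | q + 1, n => Set (Atom L (Fin K ⊕ Fin n)) × Set (HintikkaType L K q (n + 1))

instance [Finite (Σ n, L.Relations n)] (K q n : ℕ) : Finite (HintikkaType L K q n) := by
  induction q generalizing n with
  | zero => exact inferInstanceAs (Finite (Set _))
  | succ q ih =>
    have := ih (n + 1)
    exact inferInstanceAs (Finite (Set _ × Set _))

/-- The Hintikka type of the centres `a` and the moves `b`, where all further moves are restricted
to `S`. -/
def hintikkaType (L : FirstOrder.Language.{u, v}) {M : Type*} [L.Structure M] (S : Set M) {K : ℕ}
    (a : Fin K → M) : ∀ (q : ℕ) {n : ℕ}, (Fin n → M) → HintikkaType L K q n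
  | 0, _, b => {α | α.Holds (Sum.elim a b)}
  | q + 1, _, b =>
    ({α | α.Holds (Sum.elim a b)}, (fun c => hintikkaType L S a q (Fin.snoc b c)) '' S)

theorem efEquiv_of_hintikkaType_eq {M N : Type*} [L.Structure M] [L.Structure N] {S : Set M}
    {S' : Set N} {K n q : ℕ} {a : Fin K → M} {a' : Fin K → N} {b : Fin n → M} {b' : Fin n → N}
    (h : hintikkaType L S a q b = hintikkaType L S' a' q b') :
    EFEquiv L 0 S S' q (Set.range fun i => (Sum.elim a b i, Sum.elim a' b' i)) := by
  induction q generalizing n with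
  | zero => exact isPartialIso_range fun α => Set.ext_iff.1 h α
  | succ q ih =>
    obtain ⟨hatom, hmove⟩ := Prod.ext_iff.1 h
    have hinsert : ∀ c c', insert (c, c') (Set.range fun i => (Sum.elim a b i, Sum.elim a' b' i)) ⊆
        Set.range fun i => (Sum.elim a (Fin.snoc b c : Fin (n + 1) → M) i,
          Sum.elim a' (Fin.snoc b' c' : Fin (n + 1) → N) i) := by
      rintro c c' _ (rfl | ⟨i | i, rfl⟩)
      · exact ⟨.inr (Fin.last n), by simp⟩
      · exact ⟨.inl i, rfl⟩
      · exact ⟨.inr i.castSucc, by simp⟩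
    refine ⟨isPartialIso_range fun α => Set.ext_iff.1 hatom α, fun c hc => ?_, fun c' hc' => ?_⟩
    · obtain ⟨c', hc', hcc'⟩ := hmove.subset ⟨c, hc, rfl⟩
      exact ⟨c', hc', (ih hcc'.symm).mono le_rfl le_rfl (hinsert c c')⟩
    · obtain ⟨c, hc, hcc'⟩ := hmove.superset ⟨c', hc', rfl⟩
      exact ⟨c, hc, (ih hcc').mono le_rfl le_rfl (hinsert c c')⟩

theorem relativize_bot (d : L.Formula (Fin 2)) (K n : ℕ) :
    relativize d (⊥ : L.BoundedFormula (Fin K) n) = ⊥ := by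
  rw [Bot.bot, BoundedFormula.instBot, relativize]

theorem relativize_not (d : L.Formula (Fin 2)) {K n : ℕ} (ψ : L.BoundedFormula (Fin K) n) :
    relativize d ψ.not = (relativize d ψ).not := by
  rw [BoundedFormula.not, relativize, relativize_bot]
  rfl

theorem realize_relativize_all {d : L.Formula (Fin 2)} {r : ℕ} (hd : IsDistFormula.{w} L r d)
    {K n : ℕ} (ψ : L.BoundedFormula (Fin K) (n + 1)) {M : Type w} [L.Structure M] (a : Fin K → M)
    (b : Fin n → M) : (relativize d ψ.all).Realize a b ↔
      ∀ c ∈ gaifmanNbhd L r (Set.range a), (relativize d ψ).Realize a (Fin.snoc b c) := by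
  have hdist : ∀ c i, (BoundedFormula.relabel (![Sum.inl i, Sum.inr (Fin.last n)] :
      Fin 2 → Fin K ⊕ Fin (n + 1)) d).Realize a (Fin.snoc b c : Fin (n + 1) → M) ↔
      distLE L M r (a i) c := by
    intro c i
    have hval : Sum.elim a ((Fin.snoc b c : Fin (n + 1) → M) ∘ Fin.castAdd 0) ∘
        ![Sum.inl i, Sum.inr (Fin.last n)] = ![a i, c] := by
      funext j
      fin_cases j
      · rfl
      · exact Fin.snoc_last (α := fun _ => M) c b
    rw [← hd M (a i) c, Formula.Realize, ← hval]
    exact (BoundedFormula.realize_relabel (m := n + 1) (n := 0)).trans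
      (iff_of_eq (congrArg _ (Subsingleton.elim _ _)))
  simp only [relativize, BoundedFormula.realize_all, BoundedFormula.realize_imp,
    BoundedFormula.realize_foldr_sup, List.mem_map, List.mem_finRange, true_and,
    exists_exists_eq_and, hdist, gaifmanNbhd, Set.exists_range_iff, Set.mem_ofPred_eq]

/-- The property `P` of a `K`-tuple of centres and an `n`-tuple of moves is expressed, in all
structures, by a formula relativised by `d` to the centres. -/
def LocallyDefinable (d : L.Formula (Fin 2)) {K n : ℕ}
    (P : ∀ (M : Type w) [L.Structure M], (Fin K → M) → (Fin n → M) → Prop) : Prop :=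
  ∃ ψ : L.BoundedFormula (Fin K) n, ∀ (M : Type w) [L.Structure M] (a : Fin K → M) (b : Fin n → M),
    (relativize d ψ).Realize a b ↔ P M a b

namespace LocallyDefinable

variable {d : L.Formula (Fin 2)} {K n : ℕ}
  {P Q : ∀ (M : Type w) [L.Structure M], (Fin K → M) → (Fin n → M) → Prop}

theorem not (h : LocallyDefinable d P) : LocallyDefinable d fun M _ a b => ¬ P M a b := by
  obtain ⟨ψ, hψ⟩ := h
  exact ⟨ψ.not, fun M _ a b => by rw [relativize_not, BoundedFormula.realize_not, hψ]⟩

theorem and (hP : LocallyDefinable d P) (hQ : LocallyDefinable d Q) :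
    LocallyDefinable d fun M _ a b => P M a b ∧ Q M a b := by
  obtain ⟨ψ, hψ⟩ := hP
  obtain ⟨χ, hχ⟩ := hQ
  refine ⟨(ψ.imp χ.not).not, fun M _ a b => ?_⟩
  rw [relativize_not, relativize, relativize_not, BoundedFormula.realize_not,
    BoundedFormula.realize_imp, BoundedFormula.realize_not, hψ, hχ, Classical.not_imp, not_not]

theorem exists_mem_gaifmanNbhd {r : ℕ} (hd : IsDistFormula.{w} L r d)
    {P : ∀ (M : Type w) [L.Structure M], (Fin K → M) → (Fin (n + 1) → M) → Prop}
    (h : LocallyDefinable d P) : LocallyDefinable d fun M _ a (b : Fin n → M) =>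
      ∃ c ∈ gaifmanNbhd L r (Set.range a), P M a (Fin.snoc b c) := by
  obtain ⟨ψ, hψ⟩ := h
  refine ⟨ψ.not.all.not, fun M _ a b => ?_⟩
  simp only [relativize_not, BoundedFormula.realize_not, realize_relativize_all hd, hψ, not_forall,
    not_not, exists_prop]

theorem setOf_eq {ι : Type*} [Finite ι]
    {P : ι → ∀ (M : Type w) [L.Structure M], (Fin K → M) → (Fin n → M) → Prop}
    (h : ∀ i, LocallyDefinable d (P i)) (T : Set ι) :
    LocallyDefinable d fun M _ a b => {i | P i M a b} = T := by
  have hiff : ∀ i, LocallyDefinable d fun M _ a b => P i M a b ↔ i ∈ T := fun i => by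
    by_cases hi : i ∈ T
    · simpa only [hi, iff_true] using h i
    · simpa only [hi, iff_false] using (h i).not
  have hforall : ∀ s : Finset ι, LocallyDefinable d fun M _ a b => ∀ i ∈ s, P i M a b ↔ i ∈ T := by
    intro s
    induction s using Finset.cons_induction with
    | empty => exact ⟨.not ⊥, fun M _ a b => by simp [relativize_not, relativize_bot]⟩
    | cons i s _ ih => simpa only [Finset.forall_mem_cons] using (hiff i).and ih
  have := Fintype.ofFinite ι
  simpa only [Set.ext_iff, Set.mem_ofPred_eq, Finset.mem_univ, true_imp_iff]
    using hforall Finset.univ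

theorem holds (d : L.Formula (Fin 2)) (α : Atom L (Fin K ⊕ Fin n)) :
    LocallyDefinable.{w} d fun M _ a b => α.Holds (Sum.elim a b) := by
  rcases α with ⟨i, j⟩ | ⟨R, f⟩
  · exact ⟨.equal (.var i) (.var j), fun M _ a b => by rw [relativize]; rfl⟩
  · exact ⟨.rel R.2 fun i => .var (f i), fun M _ a b => by rw [relativize]; rfl⟩

theorem hintikkaType_eq [Finite (Σ n, L.Relations n)] {r : ℕ} (hd : IsDistFormula.{w} L r d)
    {q : ℕ} (τ : HintikkaType L K q n) : LocallyDefinable.{w} d fun M _ a b =>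
      hintikkaType L (gaifmanNbhd L r (Set.range (a : Fin K → M))) a q b = τ := by
  induction q generalizing n with
  | zero => exact setOf_eq (holds d) τ
  | succ q ih =>
    obtain ⟨T, Θ⟩ := τ
    have hmove := setOf_eq (fun σ => (ih (n := n + 1) σ).exists_mem_gaifmanNbhd hd) Θ
    obtain ⟨ψ, hψ⟩ := (setOf_eq (holds d) T).and hmove
    exact ⟨ψ, fun M _ a b => (hψ M a b).trans Prod.mk_inj.symm⟩

end LocallyDefinable

theorem exists_efEquiv_of_ltp_eq [Finite (Σ n, L.Relations n)] {d : L.Formula (Fin 2)} {r : ℕ}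
    (hd : IsDistFormula.{w} L r d) (K q : ℕ) :
    ∃ p₀, ∀ p ≥ p₀, ∀ (M N : Type w) [L.Structure M] [L.Structure N]
      (a : Fin K → M) (a' : Fin K → N), ltp d p M a = ltp d p N a' →
      EFEquiv L 0 (gaifmanNbhd L r (Set.range a)) (gaifmanNbhd L r (Set.range a')) q
        (Set.range fun i => (a i, a' i)) := by
  choose ψ hψ using fun τ : HintikkaType L K q 0 => LocallyDefinable.hintikkaType_eq hd τ
  obtain ⟨p₀, hp₀⟩ := (Set.finite_range fun τ => qRank (relativize d (ψ τ))).bddAbove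
  refine ⟨p₀, fun p hp M N _ _ a a' h => ?_⟩
  set τ := hintikkaType L (gaifmanNbhd L r (Set.range a)) a q (default : Fin 0 → M) with hτ
  have hmem : relativize d (ψ τ) ∈ ltp d p M a :=
    ⟨⟨ψ τ, rfl⟩, (hp₀ ⟨τ, rfl⟩).trans hp, (hψ τ M a default).2 hτ.symm⟩
  rw [h] at hmem
  refine (efEquiv_of_hintikkaType_eq ((hψ τ N a' default).1 hmem.2.2).symm).mono le_rfl le_rfl ?_
  rintro _ ⟨i, rfl⟩
  exact ⟨.inl i, rfl⟩

theorem fst_image_range_prodMk {ι M N : Type*} (x : ι → M) (x' : ι → N) :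
    Prod.fst '' (Set.range fun i => (x i, x' i)) = Set.range x :=
  (Set.range_comp ..).symm

theorem snd_image_range_prodMk {ι M N : Type*} (x : ι → M) (x' : ι → N) :
    Prod.snd '' (Set.range fun i => (x i, x' i)) = Set.range x' :=
  (Set.range_comp ..).symm

theorem exists_localEquiv_of_ltp_eq [Finite (Σ n, L.Relations n)] {d : L.Formula (Fin 2)}
    {r s : ℕ} (hd : IsDistFormula.{w} L s d) (hrs : r + r ≤ s) (K q : ℕ) :
    ∃ p₀, ∀ p ≥ p₀, ∀ (M N : Type w) [L.Structure M] [L.Structure N]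
      (a : Fin K → M) (a' : Fin K → N), ltp d p M a = ltp d p N a' →
      LocalEquiv L r q (Set.range fun i => (a i, a' i)) := by
  obtain ⟨A, hA⟩ := (Set.finite_range fun R : (Σ n, L.Relations n) => R.1).bddAbove
  obtain ⟨p₀, hp₀⟩ := exists_efEquiv_of_ltp_eq hd K (q + r * A)
  refine ⟨p₀, fun p hp M N _ _ a a' h => ?_⟩
  refine (hp₀ p hp M N a a' h).localEquiv_of_arity_le (fun n R => hA ⟨⟨n, R⟩, rfl⟩) ?_ ?_
  · exact gaifmanNbhd_mono hrs (fst_image_range_prodMk a a').subset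
  · exact gaifmanNbhd_mono hrs (snd_image_range_prodMk a a').subset

end LocalTypes

theorem LocalEquiv.union_range {L : FirstOrder.Language} {M N : Type w} [L.Structure M]
    [L.Structure N] {i j r q : ℕ} (hr : 1 ≤ r) {a : Fin i → M} {a' : Fin i → N} {b : Fin j → M}
    {b' : Fin j → N} (ha : LocalEquiv L r q (Set.range fun x => (a x, a' x)))
    (hb : LocalEquiv L r q (Set.range fun x => (b x, b' x)))
    (hfar : nbhd L M (3 * r) a ∩ nbhd L M (3 * r) b = ∅)
    (hfar' : nbhd L N (3 * r) a' ∩ nbhd L N (3 * r) b' = ∅) :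
    LocalEquiv L r q ((Set.range fun x => (a x, a' x)) ∪ Set.range fun x => (b x, b' x)) := by
  rw [← Set.disjoint_iff_inter_eq_empty, nbhd_eq_gaifmanNbhd_range, nbhd_eq_gaifmanNbhd_range]
    at hfar hfar'
  refine ha.union hr hb ?_ ?_
  · rw [fst_image_range_prodMk, fst_image_range_prodMk]
    exact hfar.mono_right (subset_gaifmanNbhd _ _)
  · rw [snd_image_range_prodMk, snd_image_range_prodMk]
    exact hfar'.mono_right (subset_gaifmanNbhd _ _)

theorem encard_range_fin_le {α : Type*} {n : ℕ} (f : Fin n → α) : (Set.range f).encard ≤ n := by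
  rw [← Set.image_univ]
  exact (Set.encard_image_le _ _).trans (by simp)

theorem append_prodMk_mem_union {α : Type*} {k ℓ m : ℕ} (hm : m ≤ ℓ) (u u' : Fin k → α)
    (v : Fin ℓ → α) (i : Fin (k + ℓ)) : (Fin.append u v i, Fin.append u' v i) ∈
      (Set.range fun i => (Fin.append u (fun j : Fin m => v (Fin.castLE hm j)) i,
        Fin.append u' (fun j : Fin m => v (Fin.castLE hm j)) i)) ∪
      Set.range fun j : Fin (ℓ - m) => (v (Fin.cast (Nat.add_sub_cancel' hm) (Fin.natAdd m j)),
        v (Fin.cast (Nat.add_sub_cancel' hm) (Fin.natAdd m j))) := by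
  cases i using Fin.addCases with
  | left i => exact Or.inl ⟨Fin.castAdd m i, by simp⟩
  | right i =>
    rw [Fin.append_right, Fin.append_right]
    by_cases him : (i : ℕ) < m
    · exact Or.inl ⟨Fin.natAdd k ⟨i, him⟩, by simp only [Fin.append_right]; rfl⟩
    · have hi : Fin.cast (Nat.add_sub_cancel' hm) (Fin.natAdd m ⟨i - m, by omega⟩) = i :=
        Fin.ext (by simp only [Fin.val_cast, Fin.val_natAdd]; omega)
      exact Or.inr ⟨⟨i - m, by omega⟩, by simp only [hi]⟩

/-- key step in Lemma 4.2: for all `k, ℓ, q` there are `q*, r*` such that for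
every structure `B`, every formula `φ(x̄; ȳ)` of quantifier rank at most `q`, every parameter
tuple `v̄ = v̄° v̄•` split at `m ≤ ℓ`, and instance tuples `ū, ū'` such that
`N_{r*}(ū v̄°)` and `N_{r*}(ū' v̄°)` are disjoint from `N_{r*}(v̄•)` and
`ltp_{q*,r*}(B, ū v̄°) = ltp_{q*,r*}(B, ū' v̄°)`, we have `B ⊨ φ(ū; v̄) ↔ B ⊨ φ(ū'; v̄)`. -/
theorem statement_3 {L : FirstOrder.Language} [L.IsRelational] [Finite L.Symbols]
    (k ℓ q : ℕ) (d : ℕ → L.Formula (Fin 2)) (hd : ∀ r, IsDistFormula.{w} L r (d r)) :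
    ∃ qs rs : ℕ, ∀ (B : Type w) [L.Structure B]
      (φ : L.Formula (Fin (k + ℓ))), qRank φ ≤ q →
      ∀ (v : Fin ℓ → B) (m : ℕ) (hm : m ≤ ℓ) (u u' : Fin k → B),
        nbhd L B rs (Fin.append u fun i : Fin m => v (Fin.castLE hm i)) ∩
            nbhd L B rs (fun i : Fin (ℓ - m) =>
              v (Fin.cast (Nat.add_sub_cancel' hm) (Fin.natAdd m i))) = ∅ →
        nbhd L B rs (Fin.append u' fun i : Fin m => v (Fin.castLE hm i)) ∩
            nbhd L B rs (fun i : Fin (ℓ - m) =>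
              v (Fin.cast (Nat.add_sub_cancel' hm) (Fin.natAdd m i))) = ∅ →
        ltp (d rs) qs B (Fin.append u fun i : Fin m => v (Fin.castLE hm i)) =
          ltp (d rs) qs B (Fin.append u' fun i : Fin m => v (Fin.castLE hm i)) →
        (φ.Realize (Fin.append u v) ↔ φ.Realize (Fin.append u' v)) := by
  have : Finite (Σ n, L.Relations n) := Finite.sum_right (Σ n, L.Functions n)
  have hr : 1 ≤ 10 ^ q := Nat.one_le_pow _ _ (by norm_num)
  choose p₀ hp₀ using fun m => exists_localEquiv_of_ltp_eq (r := 10 ^ q) (hd (3 * 10 ^ q))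
    (by omega) (k + m) (q * (k + ℓ + q))
  refine ⟨(Finset.range (ℓ + 1)).sup p₀, 3 * 10 ^ q, fun B _ φ hφ v m hm u u' hu hu' hltp => ?_⟩
  have hnear := hp₀ m _ (Finset.le_sup (Finset.mem_range_succ_iff.2 hm)) B B _ _ hltp
  have hfar : LocalEquiv L (10 ^ q) (q * (k + ℓ + q)) (Set.range fun i : Fin (ℓ - m) =>
      (v (Fin.cast (Nat.add_sub_cancel' hm) (Fin.natAdd m i)),
        v (Fin.cast (Nat.add_sub_cancel' hm) (Fin.natAdd m i)))) :=
    .of_subset_id (Set.range_subset_iff.2 fun _ => rfl)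
  have hcard : ((k + m : ℕ) + (ℓ - m : ℕ) : ℕ∞) = (k + ℓ : ℕ) := by norm_cast; omega
  have hgame := (hnear.union_range hr hfar hu hu').efEquiv_univ <| (Set.encard_union_le _ _).trans
    ((add_le_add (encard_range_fin_le _) (encard_range_fin_le _)).trans hcard.le)
  exact hgame.realize_iff φ hφ (append_prodMk_mem_union hm u u' v) finZeroElim
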